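/- arXiv:2109.13401 — 2 statements merged into one kernel-verified Lean document; each statement's English description precedes it below -/
import Mathlib

section
/- For m = 3 marked vertices on any graph G, writing A_1 = B_1 = Φ_{(1,2,2)}, A_2 = B_2 = Φ_{(1,2,1)}, A_3 = B_3 = Φ_{(1,1,2)}, the identity Φ_{(1,1,1)} · Φ_{(1,2,3)} = A_1 B_3 + A_2 B_3 + A_2 B_1 holds, where Φ_{(1,1,1)} is the spanning tree polynomial and Φ_{(1,2,3)} is the polynomial of spanning forests separating the three marked vertices. -/
open Finset

/-- A finite edge set `F` is a spanning forest of `G` compatible with the set partition of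
(a subset of) the marked vertices `v : Fin m → V` encoded by `p : Fin m → Option ℕ`
(`p i = none` means vertex `i` is unconstrained, `p i = some ℓ` means vertex `i` lies in
the part labelled `ℓ`): the edges of `F` lie in `G`, `F` is acyclic, two constrained
marked vertices lie in the same tree iff they have the same label, and every vertex of
the graph lies in the tree of some constrained marked vertex (so the trees of the forest
are in bijection with the parts of the partition). -/
def IsCompatibleForest {V : Type*} [Fintype V] [DecidableEq V] (G : SimpleGraph V) {m : ℕ}
    (v : Fin m → V) (p : Fin m → Option ℕ) (F : Finset (Sym2 V)) : Prop :=
  (F : Set (Sym2 V)) ⊆ G.edgeSet ∧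
  (SimpleGraph.fromEdgeSet (F : Set (Sym2 V))).IsAcyclic ∧
  (∀ i j : Fin m, p i ≠ none → p j ≠ none →
    ((SimpleGraph.fromEdgeSet (F : Set (Sym2 V))).Reachable (v i) (v j) ↔ p i = p j)) ∧
  (∀ w : V, ∃ i : Fin m, p i ≠ none ∧
    (SimpleGraph.fromEdgeSet (F : Set (Sym2 V))).Reachable w (v i))

/-- The spanning forest polynomial `Φ_P = Σ_{F ∼ P} Π_{e ∉ F} x_e` of the graph `G` with
edge variables `x`, marked vertices `v`, and partition `P` encoded by `p`. -/
noncomputable def forestPoly {V : Type*} [Fintype V] [DecidableEq V] {R : Type*}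
    [CommRing R] (G : SimpleGraph V) [DecidableRel G.Adj] (x : Sym2 V → R) {m : ℕ}
    (v : Fin m → V) (p : Fin m → Option ℕ) : R :=
  ∑ F ∈ G.edgeFinset.powerset,
    (letI := Classical.dec (IsCompatibleForest G v p F)
     if IsCompatibleForest G v p F then ∏ e ∈ G.edgeFinset \ F, x e else 0)

/-!
Root the spanning forests at the first marked vertex `r = v 0` and ground the weighted Laplacian
there. If the edges of a forest carry the weights `y e = (x e)⁻¹`, then `forestPoly` is, up to the
factor `∏ e, x e`, the sum of the weights of the compatible forests. Expanding the determinant of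
the grounded Laplacian row by row gives a sum over parent maps, to which only the cycle-free ones
contribute; the adjugate entry `(i, j)` likewise sums the forests with roots `r` and `j` in which
`i` lies in the tree of `j`. The identity is then Jacobi's formula for a `2 × 2` minor of the
adjugate, at `v 1` and `v 2`. It holds for all edge variables because it holds for generic, hence
invertible, ones.
-/

section Jacobi

variable {n R : Type*} [Fintype n] [DecidableEq n] [CommRing R]

theorem det_mul_det_updateRow_updateRow (A : Matrix n n R) {i j : n} (hij : i ≠ j) (k l : n) :
    A.det * ((A.updateRow i (Pi.single k 1)).updateRow j (Pi.single l 1)).det =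
      A.adjugate k i * A.adjugate l j - A.adjugate k j * A.adjugate l i := by
  set B := A.updateRow i (Pi.single k 1) with hB
  have expand : A.det • (Pi.single l 1 : n → R) = ∑ m, A.adjugate l m • A.row m := by
    ext c
    simpa [Matrix.mul_apply, Matrix.one_eq_pi_single] using
      (congrFun (congrFun A.adjugate_mul l) c).symm
  have row_j : (B.updateRow j (A.row j)).det = A.adjugate k i := by
    rw [Matrix.adjugate_apply, hB, Matrix.updateRow_comm _ hij, Matrix.row,
      Matrix.updateRow_eq_self]
  have row_i : (B.updateRow j (A.row i)).det = -A.adjugate k j := by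
    have swap_rows : B.updateRow j (A.row i) =
        (A.updateRow j (Pi.single k 1)).submatrix (Equiv.swap i j) id := by
      ext a b
      by_cases haj : a = j
      · subst haj; simp [hij]
      · by_cases hai : a = i
        · subst hai; simp [hB, hij]
        · simp [hB, haj, hai, Equiv.swap_apply_of_ne_of_ne hai haj]
    rw [swap_rows, Matrix.det_permute, Equiv.Perm.sign_swap hij, Matrix.adjugate_apply]
    simp
  have row_other (m : n) (hi : m ≠ i) (hj : m ≠ j) : (B.updateRow j (A.row m)).det = 0 :=
    Matrix.det_zero_of_row_eq hj (by ext; simp [hB, hi, hj])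
  calc A.det * (B.updateRow j (Pi.single l 1)).det
      = (B.updateRow j (∑ m, A.adjugate l m • A.row m)).det := by
        rw [← expand, Matrix.det_updateRow_smul]
    _ = ∑ m, A.adjugate l m * (B.updateRow j (A.row m)).det := by
        simp [← Matrix.cramer_transpose_apply]
    _ = A.adjugate l i * -A.adjugate k j + A.adjugate l j * A.adjugate k i := by
        rw [Fintype.sum_eq_add i j hij fun m hm => by rw [row_other m hm.1 hm.2, mul_zero],
          row_i, row_j]
    _ = _ := by ring

end Jacobi

section ParentMap

variable {V : Type*} {S : Finset V} {g : V → V}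

/-- A forest oriented towards its set `S` of roots, encoded by the map sending each vertex to its
parent; the roots are the fixed points. -/
structure IsParentMap (S : Finset V) (g : V → V) : Prop where
  map_root : ∀ s ∈ S, g s = s
  exists_iterate_mem : ∀ u, ∃ n, g^[n] u ∈ S

theorem exists_iterate_update_eq [DecidableEq V] {j : V} (i : V) {u : V} (hu : ∃ n, g^[n] u = j) :
    ∃ n, (Function.update g j i)^[n] u = j := by
  obtain ⟨n, hn⟩ := hu
  induction n generalizing u with
  | zero => exact ⟨0, hn⟩
  | succ n ih =>
    by_cases huj : u = j
    · exact ⟨0, huj⟩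
    · obtain ⟨m, hm⟩ := ih hn
      exact ⟨m + 1, by simpa [huj] using hm⟩

namespace IsParentMap

theorem iterate_root (h : IsParentMap S g) {s : V} (hs : s ∈ S) (n : ℕ) : g^[n] s = s :=
  Function.iterate_fixed (h.map_root s hs) n

theorem iterate_succ_ne (h : IsParentMap S g) {u : V} (hu : u ∉ S) (n : ℕ) : g^[n] (g u) ≠ u := by
  intro hcycle
  obtain ⟨m, hm⟩ := h.exists_iterate_mem u
  have periodic : g^[(n + 1) * m] u = u := by
    rw [Function.iterate_mul]
    exact Function.iterate_fixed hcycle m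
  rw [add_one_mul, Function.iterate_add_apply, h.iterate_root hm] at periodic
  exact hu (periodic ▸ hm)

theorem exists_depth (h : IsParentMap S g) : ∃ d : V → ℕ, ∀ u ∉ S, d (g u) < d u := by
  classical
  refine ⟨fun u => Nat.find (h.exists_iterate_mem u), fun u hu => ?_⟩
  have hpos : Nat.find (h.exists_iterate_mem u) ≠ 0 := fun h0 =>
    hu ((Nat.find_eq_zero (h.exists_iterate_mem u)).1 h0)
  obtain ⟨k, hk⟩ := Nat.exists_eq_succ_of_ne_zero hpos
  have hroot := Nat.find_spec (h.exists_iterate_mem u)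
  rw [hk] at hroot
  exact (Nat.find_min' _ hroot).trans_lt (by simp only [hk, Nat.lt_succ_self])

theorem of_depth (hS : ∀ s ∈ S, g s = s) (d : V → ℕ) (hd : ∀ u ∉ S, d (g u) < d u) :
    IsParentMap S g where
  map_root := hS
  exists_iterate_mem u := by
    induction hk : d u using Nat.strong_induction_on generalizing u with
    | _ k ih =>
      by_cases hu : u ∈ S
      · exact ⟨0, hu⟩
      · obtain ⟨m, hm⟩ := ih _ (hk ▸ hd u hu) (g u) rfl
        exact ⟨m + 1, hm⟩

variable [DecidableEq V]

theorem update_self (h : IsParentMap S g) (j : V) :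
    IsParentMap (insert j S) (Function.update g j j) := by
  obtain ⟨d, hd⟩ := h.exists_depth
  refine .of_depth (fun s hs => ?_) d fun u hu => ?_
  · by_cases hsj : s = j
    · simp [hsj]
    · simpa [hsj] using h.map_root s (mem_of_mem_insert_of_ne hs hsj)
  · rw [mem_insert, not_or] at hu
    simpa [hu.1] using hd u hu.2

theorem update_iff {i j : V} (h : IsParentMap (insert j S) g) (hj : j ∉ S) :
    IsParentMap S (Function.update g j i) ↔ ¬∃ n, g^[n] i = j := by
  constructor
  · intro h' hij
    obtain ⟨n, hn⟩ := exists_iterate_update_eq i hij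
    exact h'.iterate_succ_ne hj n (by simpa using hn)
  · intro hij
    rw [not_exists] at hij
    have orbit_i (n : ℕ) : (Function.update g j i)^[n] i = g^[n] i := by
      induction n with
      | zero => rfl
      | succ n ih => rw [Function.iterate_succ_apply', ih, Function.update_of_ne (hij n),
          ← Function.iterate_succ_apply' g]
    have root_j : ∃ n, (Function.update g j i)^[n] j ∈ S := by
      obtain ⟨n, hn⟩ := h.exists_iterate_mem i
      refine ⟨n + 1, ?_⟩
      simpa [orbit_i] using mem_of_mem_insert_of_ne hn (hij n)
    refine ⟨fun s hs => ?_, fun u => ?_⟩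
    · rw [Function.update_of_ne (ne_of_mem_of_not_mem hs hj)]
      exact h.map_root s (mem_insert_of_mem hs)
    · obtain ⟨n, hn⟩ := h.exists_iterate_mem u
      induction n generalizing u with
      | zero =>
        obtain rfl | hu := mem_insert.1 hn
        · exact root_j
        · exact ⟨0, hu⟩
      | succ n ih =>
        by_cases huj : u = j
        · exact huj ▸ root_j
        · obtain ⟨m, hm⟩ := ih (g u) hn
          exact ⟨m + 1, by simpa [huj] using hm⟩

end IsParentMap

end ParentMap

section MatrixTree

variable {V R : Type*} [DecidableEq V] [CommRing R] {S : Finset V} {g : V → V}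

variable (R) in
/-- The incidence matrix of a parent map: row `u` is `e_u` at a root and `e_u - e_{g u}`
elsewhere. -/
def parentMatrix (S : Finset V) (g : V → V) : Matrix V V R :=
  Matrix.of fun u => if u ∈ S then Pi.single u 1 else Pi.single u 1 - Pi.single (g u) 1

/-- The Laplacian of the directed graph with edge weights `w`, grounded at `S`: the rows of the
vertices in `S` are replaced by unit vectors, so that the determinant is the principal minor
omitting `S`. -/
def groundedLaplacian [Fintype V] (w : Matrix V V R) (S : Finset V) : Matrix V V R :=
  Matrix.of fun u =>
    if u ∈ S then Pi.single u 1 else ∑ v, w u v • (Pi.single u 1 - Pi.single v 1)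

theorem det_parentMatrix_eq_one [Fintype V] (h : IsParentMap S g) :
    (parentMatrix R S g).det = 1 := by
  obtain ⟨d, hd⟩ := h.exists_depth
  have triangular : (parentMatrix R S g).BlockTriangular (OrderDual.toDual ∘ d) := by
    intro u v huv
    have huv : d u < d v := huv
    have hne : v ≠ u := by rintro rfl; exact huv.false
    by_cases hu : u ∈ S
    · simp [parentMatrix, hu, hne]
    · have hparent : v ≠ g u := by rintro rfl; exact (hd u hu).not_gt huv
      simp [parentMatrix, hu, hne, hparent]
  rw [triangular.det]
  refine prod_eq_one fun k _ => ?_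
  suffices (parentMatrix R S g).toSquareBlock (OrderDual.toDual ∘ d) k = 1 by
    rw [this, Matrix.det_one]
  ext ⟨u, rfl⟩ ⟨v, hv⟩
  have hv : d v = d u := hv
  by_cases hu : u ∈ S
  · simp [Matrix.toSquareBlock_def, parentMatrix, hu, Matrix.one_apply, Pi.single_apply, eq_comm]
  · have hparent : v ≠ g u := by rintro rfl; exact (hd u hu).ne hv
    simp [Matrix.toSquareBlock_def, parentMatrix, hu, Matrix.one_apply, Pi.single_apply,
      hparent, eq_comm (a := u)]

theorem det_parentMatrix_eq_zero [Fintype V] {u : V} (hu : ∀ n, g^[n] u ∉ S) :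
    (parentMatrix R S g).det = 0 := by
  classical
  let χ : V → R := fun w => if ∀ n, g^[n] w ∉ S then 1 else 0
  have χ_root (w : V) (hw : w ∈ S) : χ w = 0 := if_neg fun h => h 0 hw
  have χ_parent (w : V) (hw : w ∉ S) : χ w = χ (g w) := by
    have : (∀ n, g^[n] w ∉ S) ↔ ∀ n, g^[n] (g w) ∉ S :=
      ⟨fun h n => h (n + 1), fun h n => n.casesOn hw h⟩
    simp only [χ, this]
  refine Matrix.det_eq_zero_of_mulVec_eq_zero_of_mem_nonZeroDivisors (v := χ) (i := u) ?_
    (by simp [χ, hu])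
  ext w
  by_cases hw : w ∈ S
  · simp [parentMatrix, Matrix.mulVec, hw, χ_root w hw]
  · simp [parentMatrix, Matrix.mulVec, hw, dotProduct, sub_mul, Pi.single_apply, χ_parent w hw]

open Classical in
theorem det_groundedLaplacian [Fintype V] (w : Matrix V V R) (S : Finset V) :
    (groundedLaplacian w S).det =
      ∑ g : V → V with IsParentMap S g, ∏ u ∈ Sᶜ, w u (g u) := by
  let c (u v : V) : R := if u ∈ S then if v = u then 1 else 0 else w u v
  let row (u v : V) : V → R := if u ∈ S then Pi.single u 1 else Pi.single u 1 - Pi.single v 1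
  have hrows : groundedLaplacian w S = fun u => ∑ v, c u v • row u v := by
    ext u a
    by_cases hu : u ∈ S <;> simp [groundedLaplacian, c, row, hu, Finset.sum_apply, ite_apply]
  have expand : (groundedLaplacian w S).det =
      ∑ g : V → V, (∏ u, c u (g u)) * (parentMatrix R S g).det := by
    change Matrix.detRowAlternating.toMultilinearMap _ = _
    rw [hrows, MultilinearMap.map_sum]
    exact sum_congr rfl fun g _ => MultilinearMap.map_smul_univ _ _ _
  rw [expand, sum_filter]
  refine sum_congr rfl fun g _ => ?_
  by_cases hroots : ∀ s ∈ S, g s = s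
  · have hprod : ∏ u, c u (g u) = ∏ u ∈ Sᶜ, w u (g u) := by
      rw [← prod_mul_prod_compl S, prod_eq_one fun s hs => by simp [c, hs, hroots s hs], one_mul]
      exact prod_congr rfl fun u hu => if_neg (mem_compl.1 hu)
    split_ifs with hg
    · rw [det_parentMatrix_eq_one hg, hprod, mul_one]
    · obtain ⟨u, hu⟩ : ∃ u, ∀ n, g^[n] u ∉ S := by
        by_contra! hc
        exact hg ⟨hroots, hc⟩
      rw [det_parentMatrix_eq_zero hu, mul_zero]
  · rw [if_neg fun hg => hroots hg.map_root]
    push Not at hroots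
    obtain ⟨s, hs, hgs⟩ := hroots
    rw [prod_eq_zero (mem_univ s) (by simp [c, hs, hgs]), zero_mul]

end MatrixTree

section AllMinors

variable {V R : Type*} [Fintype V] [DecidableEq V] [CommRing R] {S : Finset V}

theorem groundedLaplacian_updateRow_single (w : Matrix V V R) (S : Finset V) (j : V) :
    (groundedLaplacian w S).updateRow j (Pi.single j 1) = groundedLaplacian w (insert j S) := by
  ext u a
  by_cases hu : u = j
  · subst hu; simp [groundedLaplacian]
  · simp [groundedLaplacian, hu]

theorem groundedLaplacian_updateRow_single_sub_single (w : Matrix V V R) {j : V} (hj : j ∉ S)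
    (i : V) :
    (groundedLaplacian w S).updateRow j (Pi.single j 1 - Pi.single i 1) =
      groundedLaplacian (w.updateRow j (Pi.single i 1)) S := by
  ext u a
  by_cases hu : u = j
  · subst hu; simp [groundedLaplacian, hj, Pi.single_apply, ite_apply]
  · simp [groundedLaplacian, hu]

open Classical in
theorem sum_isParentMap_updateRow_single (w : Matrix V V R) {j : V} (hj : j ∉ S) (i : V) :
    ∑ g : V → V with IsParentMap S g, ∏ u ∈ Sᶜ, w.updateRow j (Pi.single i 1) u (g u) =
      ∑ g : V → V with IsParentMap (insert j S) g ∧ ¬∃ n, g^[n] i = j,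
        ∏ u ∈ (insert j S)ᶜ, w u (g u) := by
  have hcompl : Sᶜ = insert j (insert j S)ᶜ := by
    rw [compl_insert, insert_erase (mem_compl.2 hj)]
  have hweight (g : V → V) : ∏ u ∈ Sᶜ, w.updateRow j (Pi.single i 1) u (g u) =
      if g j = i then ∏ u ∈ (insert j S)ᶜ, w u (g u) else 0 := by
    rw [hcompl, prod_insert (by simp), Matrix.updateRow_self, Pi.single_apply, ite_mul, one_mul,
      zero_mul]
    refine if_congr Iff.rfl (prod_congr rfl fun u hu => ?_) rfl
    rw [Matrix.updateRow_ne (by rintro rfl; simp at hu)]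
  simp_rw [hweight]
  rw [← sum_filter, filter_filter]
  refine sum_bij' (fun g _ => Function.update g j j) (fun g _ => Function.update g j i)
    ?_ ?_ ?_ ?_ ?_
  · simp only [mem_filter_univ]
    rintro g ⟨hg, rfl⟩
    refine ⟨hg.update_self j, ?_⟩
    rw [← (hg.update_self j).update_iff hj]
    simpa using hg
  · simp only [mem_filter_univ]
    rintro g ⟨hg, hij⟩
    exact ⟨(hg.update_iff hj).2 hij, by simp⟩
  · simp only [mem_filter_univ]
    rintro g ⟨-, rfl⟩
    simp
  · simp only [mem_filter_univ]
    rintro g ⟨hg, -⟩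
    simpa using (hg.map_root j (mem_insert_self j S)).symm
  · intro g _
    refine prod_congr rfl fun u hu => ?_
    rw [Function.update_of_ne (by rintro rfl; simp at hu)]

open Classical in
theorem adjugate_groundedLaplacian (w : Matrix V V R) (i : V) {j : V} (hj : j ∉ S) :
    (groundedLaplacian w S).adjugate i j =
      ∑ g : V → V with IsParentMap (insert j S) g ∧ ∃ n, g^[n] i = j,
        ∏ u ∈ (insert j S)ᶜ, w u (g u) := by
  have hsplit : (groundedLaplacian w S).adjugate i j =
      (groundedLaplacian w (insert j S)).det -
        (groundedLaplacian (w.updateRow j (Pi.single i 1)) S).det := by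
    rw [Matrix.adjugate_apply, ← groundedLaplacian_updateRow_single,
      ← groundedLaplacian_updateRow_single_sub_single w hj, eq_sub_iff_add_eq,
      ← Matrix.det_updateRow_add, add_sub_cancel]
  rw [hsplit, det_groundedLaplacian, det_groundedLaplacian,
    sum_isParentMap_updateRow_single w hj, sub_eq_iff_eq_add, ← filter_filter, ← filter_filter,
    sum_filter_add_sum_filter_not]

end AllMinors

section RootedForest

variable {V : Type*} {G : SimpleGraph V} {S : Finset V} {F : Finset (Sym2 V)}

/-- The graph on `V` with edge set `F`. -/
abbrev edgeGraph (F : Finset (Sym2 V)) : SimpleGraph V := .fromEdgeSet F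

/-- `F` is the edge set of a spanning forest of `G` each of whose trees contains exactly one
vertex of `S`, its root. -/
structure IsRootedForest (G : SimpleGraph V) (S : Finset V) (F : Finset (Sym2 V)) : Prop where
  subset_edgeSet : (F : Set (Sym2 V)) ⊆ G.edgeSet
  isAcyclic : (edgeGraph F).IsAcyclic
  root_unique : ∀ s ∈ S, ∀ t ∈ S, (edgeGraph F).Reachable s t → s = t
  exists_root : ∀ u, ∃ s ∈ S, (edgeGraph F).Reachable u s

theorem edgeSet_edgeGraph (hF : (F : Set (Sym2 V)) ⊆ G.edgeSet) :
    (edgeGraph F).edgeSet = F := by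
  rw [SimpleGraph.edgeSet_fromEdgeSet, sdiff_eq_left]
  exact Set.disjoint_left.2 fun e he => G.not_isDiag_of_mem_edgeSet (hF he)

theorem reachable_congr_of_adj {H : SimpleGraph V} {P : V → Prop}
    (hP : ∀ a b, H.Adj a b → (P a ↔ P b)) {a b : V} (hab : H.Reachable a b) : P a ↔ P b := by
  obtain ⟨p⟩ := hab
  induction p with
  | nil => rfl
  | cons hadj _ ih => exact (hP _ _ hadj).trans ih

namespace IsRootedForest

theorem eq_of_subset {F' : Finset (Sym2 V)} (hF' : IsRootedForest G S F')
    (hF : IsRootedForest G S F) (hsub : F' ⊆ F) : F' = F := by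
  have hle : edgeGraph F' ≤ edgeGraph F := SimpleGraph.fromEdgeSet_mono (mod_cast hsub)
  have same_trees : (edgeGraph F').Reachable = (edgeGraph F).Reachable := by
    ext a b
    refine ⟨fun hab => hab.mono hle, fun hab => ?_⟩
    obtain ⟨s, hs, has⟩ := hF'.exists_root a
    obtain ⟨t, ht, hbt⟩ := hF'.exists_root b
    obtain rfl := hF.root_unique s hs t ht
      (((has.mono hle).symm.trans hab).trans (hbt.mono hle))
    exact has.trans hbt.symm
  have maximal := (SimpleGraph.maximal_isAcyclic_iff_reachable_eq hle hF'.isAcyclic).2 same_trees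
  have heq := maximal.eq_of_le ⟨le_rfl, hF.isAcyclic⟩ hle
  rw [← coe_inj, ← edgeSet_edgeGraph hF'.subset_edgeSet, heq, edgeSet_edgeGraph hF.subset_edgeSet]

end IsRootedForest

end RootedForest

section ParentEdges

variable {V : Type*} [Fintype V] [DecidableEq V] {G : SimpleGraph V} {S : Finset V} {g : V → V}
  {F : Finset (Sym2 V)}

/-- The edges joining each vertex outside `S` to its parent. -/
def parentEdges (S : Finset V) (g : V → V) : Finset (Sym2 V) := Sᶜ.image fun u => s(u, g u)

theorem mem_parentEdges {e : Sym2 V} : e ∈ parentEdges S g ↔ ∃ u ∉ S, s(u, g u) = e := by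
  simp [parentEdges]

theorem coe_parentEdges_subset_edgeSet_iff :
    (parentEdges S g : Set (Sym2 V)) ⊆ G.edgeSet ↔ ∀ u ∉ S, G.Adj u (g u) := by
  simp [Set.subset_def, mem_parentEdges]

namespace IsParentMap

theorem adj_parentEdges_iff (h : IsParentMap S g) {a b : V} :
    (edgeGraph (parentEdges S g)).Adj a b ↔ (a ∉ S ∧ g a = b) ∨ (b ∉ S ∧ g b = a) := by
  rw [SimpleGraph.fromEdgeSet_adj, mem_coe, mem_parentEdges]
  constructor
  · rintro ⟨⟨u, hu, he⟩, -⟩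
    obtain ⟨rfl, rfl⟩ | ⟨rfl, rfl⟩ := Sym2.eq_iff.1 he
    · exact .inl ⟨hu, rfl⟩
    · exact .inr ⟨hu, rfl⟩
  · rintro (⟨ha, rfl⟩ | ⟨hb, rfl⟩)
    · exact ⟨⟨a, ha, rfl⟩, (h.iterate_succ_ne ha 0).symm⟩
    · exact ⟨⟨b, hb, Sym2.eq_swap⟩, h.iterate_succ_ne hb 0⟩

theorem exists_iterate_eq_congr_of_adj (h : IsParentMap S g) {a b u : V}
    (hab : (edgeGraph (parentEdges S g)).Adj a b) (hne : s(a, b) ≠ s(u, g u)) :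
    (∃ n, g^[n] a = u) ↔ ∃ n, g^[n] b = u := by
  have parent_congr (c : V) (hc : c ≠ u) : (∃ n, g^[n] c = u) ↔ ∃ n, g^[n] (g c) = u :=
    ⟨fun ⟨n, hn⟩ => n.casesOn (fun h0 => absurd h0 hc) (fun m hm => ⟨m, hm⟩) hn,
      fun ⟨n, hn⟩ => ⟨n + 1, hn⟩⟩
  obtain ⟨-, rfl⟩ | ⟨-, rfl⟩ := h.adj_parentEdges_iff.1 hab
  · exact parent_congr a (by rintro rfl; exact hne rfl)
  · exact (parent_congr b (by rintro rfl; exact hne Sym2.eq_swap)).symm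

theorem reachable_iterate (h : IsParentMap S g) (u : V) (n : ℕ) :
    (edgeGraph (parentEdges S g)).Reachable u (g^[n] u) := by
  induction n generalizing u with
  | zero => rfl
  | succ n ih =>
    by_cases hu : u ∈ S
    · rw [h.iterate_root hu]
    · exact (h.adj_parentEdges_iff.2 (.inl ⟨hu, rfl⟩)).reachable.trans (ih (g u))

theorem reachable_root_iff (h : IsParentMap S g) (u : V) {s : V} (hs : s ∈ S) :
    (edgeGraph (parentEdges S g)).Reachable u s ↔ ∃ n, g^[n] u = s := by
  refine ⟨fun hus => ?_, fun ⟨n, hn⟩ => hn ▸ h.reachable_iterate u n⟩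
  refine (reachable_congr_of_adj (P := fun a => ∃ n, g^[n] a = s) (fun a b hab => ?_) hus).2
    ⟨0, rfl⟩
  refine h.exists_iterate_eq_congr_of_adj hab fun he => hab.ne ?_
  rw [← Sym2.mk_isDiag_iff, he, h.map_root s hs]
  simp

theorem isAcyclic_parentEdges (h : IsParentMap S g) : (edgeGraph (parentEdges S g)).IsAcyclic := by
  have isBridge_parent (u : V) (hu : u ∉ S) :
      (edgeGraph (parentEdges S g)).IsBridge s(u, g u) := by
    rw [SimpleGraph.isBridge_iff]
    intro hreach
    have same_side := reachable_congr_of_adj (P := fun a => ∃ n, g^[n] a = u)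
      (fun a b hab => by
        rw [SimpleGraph.deleteEdges_adj] at hab
        exact h.exists_iterate_eq_congr_of_adj hab.1 hab.2) hreach
    obtain ⟨n, hn⟩ := same_side.1 ⟨0, rfl⟩
    exact h.iterate_succ_ne hu n hn
  rw [SimpleGraph.isAcyclic_iff_forall_adj_isBridge]
  intro a b hab
  obtain ⟨ha, rfl⟩ | ⟨hb, rfl⟩ := h.adj_parentEdges_iff.1 hab
  · exact isBridge_parent a ha
  · exact Sym2.eq_swap ▸ isBridge_parent b hb

theorem isRootedForest_parentEdges (h : IsParentMap S g) (hG : ∀ u ∉ S, G.Adj u (g u)) :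
    IsRootedForest G S (parentEdges S g) where
  subset_edgeSet := coe_parentEdges_subset_edgeSet_iff.2 hG
  isAcyclic := h.isAcyclic_parentEdges
  root_unique s hs t ht hst := by
    obtain ⟨n, hn⟩ := (h.reachable_root_iff s ht).1 hst
    rwa [h.iterate_root hs] at hn
  exists_root u := by
    obtain ⟨n, hn⟩ := h.exists_iterate_mem u
    exact ⟨_, hn, h.reachable_iterate u n⟩

theorem injOn_parentEdge (h : IsParentMap S g) :
    Set.InjOn (fun u => s(u, g u)) (Sᶜ : Finset V) := by
  intro u hu w _ he
  obtain ⟨huw, -⟩ | ⟨huw, hwu⟩ := Sym2.eq_iff.1 he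
  · exact huw
  · exact absurd (hwu.symm ▸ huw.symm : g (g u) = u) (h.iterate_succ_ne (by simpa using hu) 1)

theorem eq_of_parentEdges_eq {g' : V → V} (h : IsParentMap S g) (h' : IsParentMap S g')
    (he : parentEdges S g = parentEdges S g') : g = g' := by
  ext u
  obtain ⟨n, hn⟩ := h.exists_iterate_mem u
  induction n generalizing u with
  | zero => rw [h.map_root u hn, h'.map_root u hn]
  | succ n ih =>
    by_cases hu : u ∈ S
    · rw [h.map_root u hu, h'.map_root u hu]
    obtain ⟨w, -, hw⟩ := mem_parentEdges.1 (he ▸ mem_parentEdges.2 ⟨u, hu, rfl⟩)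
    obtain ⟨rfl, hgu⟩ | ⟨rfl, hgu⟩ := Sym2.eq_iff.1 hw
    · exact hgu.symm
    · exact absurd ((ih _ hn).trans hgu) (h.iterate_succ_ne hu 1)

end IsParentMap

theorem IsRootedForest.exists_isParentMap (hF : IsRootedForest G S F) :
    ∃ g, IsParentMap S g ∧ parentEdges S g = F := by
  choose root root_mem reachable_root using hF.exists_root
  let d (u : V) : ℕ := (edgeGraph F).dist u (root u)
  have exists_parent (u : V) :
      ∃ w, (u ∈ S → w = u) ∧ (u ∉ S → (edgeGraph F).Adj u w ∧ d w < d u) := by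
    by_cases hu : u ∈ S
    · exact ⟨u, fun _ => rfl, fun h => absurd hu h⟩
    obtain ⟨p, hp⟩ := (reachable_root u).exists_walk_length_eq_dist
    have hp' : ¬p.Nil := fun hnil => hu (hnil.eq ▸ root_mem u)
    have hadj := p.adj_snd hp'
    have same_root : root p.snd = root u := hF.root_unique _ (root_mem _) _ (root_mem _)
      ((reachable_root _).symm.trans (hadj.symm.reachable.trans (reachable_root u)))
    refine ⟨p.snd, fun h => absurd h hu, fun _ => ⟨hadj, ?_⟩⟩
    calc d p.snd ≤ p.tail.length := by
          rw [show d p.snd = (edgeGraph F).dist p.snd (root u) by simp only [d, same_root]]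
          exact SimpleGraph.dist_le _
      _ < p.length := by rw [← p.length_tail_add_one hp']; exact Nat.lt_succ_self _
      _ = d u := hp
  choose g map_root parent using exists_parent
  have hg : IsParentMap S g := .of_depth map_root d fun u hu => (parent u hu).2
  have hsub : parentEdges S g ⊆ F := by
    intro e he
    obtain ⟨u, hu, rfl⟩ := mem_parentEdges.1 he
    exact ((SimpleGraph.fromEdgeSet_adj _).1 (parent u hu).1).1
  have hforest : IsRootedForest G S (parentEdges S g) := hg.isRootedForest_parentEdges
    (coe_parentEdges_subset_edgeSet_iff.1 ((coe_subset.2 hsub).trans hF.subset_edgeSet))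
  exact ⟨g, hg, hforest.eq_of_subset hF hsub⟩

end ParentEdges

section EdgeGenFun

variable {V R : Type*} [CommSemiring R] {G : SimpleGraph V} {S : Finset V}

/-- The weighted adjacency matrix of `G` with edge weights `y`. -/
def adjWeight (G : SimpleGraph V) [DecidableRel G.Adj] (y : Sym2 V → R) : Matrix V V R :=
  Matrix.of fun u v => if G.Adj u v then y s(u, v) else 0

variable [Fintype V]

open Classical in
/-- The generating function of the edge sets satisfying `P`, in which an edge set has as weight the
product of the weights of its members; `forestPoly` weighs the complement instead. -/
noncomputable def edgeGenFun (y : Sym2 V → R) (P : Finset (Sym2 V) → Prop) : R :=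
  ∑ F with P F, ∏ e ∈ F, y e

theorem edgeGenFun_congr (y : Sym2 V → R) {P Q : Finset (Sym2 V) → Prop} (h : ∀ F, P F ↔ Q F) :
    edgeGenFun y P = edgeGenFun y Q :=
  congrArg (edgeGenFun y) (funext fun F => propext (h F))

theorem edgeGenFun_isRootedForest_eq_sum_reachable (y : Sym2 V → R) (u : V) :
    edgeGenFun y (IsRootedForest G S) =
      ∑ s ∈ S, edgeGenFun y fun F => IsRootedForest G S F ∧ (edgeGraph F).Reachable u s := by
  classical
  simp only [edgeGenFun, sum_filter]
  rw [sum_comm]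
  refine sum_congr rfl fun F _ => ?_
  by_cases hF : IsRootedForest G S F
  · obtain ⟨s, hs, hus⟩ := hF.exists_root u
    rw [sum_eq_single_of_mem s hs fun t ht hts =>
      if_neg fun hut => hts (hF.root_unique t ht s hs (hut.2.symm.trans hus)), if_pos hF,
      if_pos ⟨hF, hus⟩]
  · simp [hF]

variable [DecidableEq V] [DecidableRel G.Adj]

theorem prod_adjWeight {g : V → V} (h : IsParentMap S g) (hG : ∀ u ∉ S, G.Adj u (g u))
    (y : Sym2 V → R) :
    ∏ u ∈ Sᶜ, adjWeight G y u (g u) = ∏ e ∈ parentEdges S g, y e := by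
  rw [parentEdges, prod_image h.injOn_parentEdge]
  exact prod_congr rfl fun u hu => if_pos (hG u (mem_compl.1 hu))

open Classical in
theorem sum_isParentMap_adjWeight (y : Sym2 V → R) (Q : Finset (Sym2 V) → Prop) :
    ∑ g with IsParentMap S g ∧ Q (parentEdges S g), ∏ u ∈ Sᶜ, adjWeight G y u (g u) =
      edgeGenFun y fun F => IsRootedForest G S F ∧ Q F := by
  rw [edgeGenFun, ← sum_filter_of_ne (p := fun g => ∀ u ∉ S, G.Adj u (g u)), filter_filter]
  · refine sum_bij (fun g _ => parentEdges S g) ?_ ?_ ?_ ?_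
    · simp only [mem_filter_univ]
      rintro g ⟨⟨hg, hQ⟩, hG⟩
      exact ⟨hg.isRootedForest_parentEdges hG, hQ⟩
    · simp only [mem_filter_univ]
      rintro g ⟨⟨hg, -⟩, -⟩ g' ⟨⟨hg', -⟩, -⟩ he
      exact hg.eq_of_parentEdges_eq hg' he
    · simp only [mem_filter_univ]
      rintro F ⟨hF, hQ⟩
      obtain ⟨g, hg, rfl⟩ := hF.exists_isParentMap
      exact ⟨g, ⟨⟨hg, hQ⟩, coe_parentEdges_subset_edgeSet_iff.1 hF.subset_edgeSet⟩, rfl⟩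
    · simp only [mem_filter_univ]
      rintro g ⟨⟨hg, -⟩, hG⟩
      exact prod_adjWeight hg hG y
  · intro g _ hne u hu
    by_contra hadj
    exact hne (prod_eq_zero (mem_compl.2 hu) (if_neg hadj))

end EdgeGenFun

section ForestMinors

variable {V R : Type*} [Fintype V] [DecidableEq V] [CommRing R] {G : SimpleGraph V}
  [DecidableRel G.Adj] {S : Finset V}

theorem det_groundedLaplacian_adjWeight (y : Sym2 V → R) (S : Finset V) :
    (groundedLaplacian (adjWeight G y) S).det = edgeGenFun y (IsRootedForest G S) := by
  classical
  rw [det_groundedLaplacian]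
  simpa only [and_true] using sum_isParentMap_adjWeight (G := G) (S := S) y fun _ => True

theorem adjugate_groundedLaplacian_adjWeight (y : Sym2 V → R) (i : V) {j : V} (hj : j ∉ S) :
    (groundedLaplacian (adjWeight G y) S).adjugate i j =
      edgeGenFun y fun F => IsRootedForest G (insert j S) F ∧ (edgeGraph F).Reachable i j := by
  classical
  rw [adjugate_groundedLaplacian _ i hj,
    ← sum_isParentMap_adjWeight y fun F => (edgeGraph F).Reachable i j]
  refine sum_congr (Finset.ext fun g => ?_) fun _ _ => rfl
  simp only [mem_filter_univ]
  exact and_congr_right fun hg => (hg.reachable_root_iff i (mem_insert_self j S)).symm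

end ForestMinors

section CompatibleForest

variable {V R : Type*} [Fintype V] [DecidableEq V] [CommRing R] {G : SimpleGraph V}

theorem isCompatibleForest_iff {m : ℕ} {v : Fin m → V} (hv : v.Injective) {p : Fin m → Option ℕ}
    (hp : ∀ i, p i ≠ none) {rep : Fin m → Fin m} (p_rep : ∀ i, p (rep i) = p i)
    (rep_congr : ∀ i j, p i = p j → rep i = rep j) {F : Finset (Sym2 V)} :
    IsCompatibleForest G v p F ↔ IsRootedForest G (univ.image (v ∘ rep)) F ∧
      ∀ i, (edgeGraph F).Reachable (v i) (v (rep i)) := by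
  constructor
  · rintro ⟨hsub, hacyclic, hparts, hcover⟩
    have reachable_rep (i : Fin m) : (edgeGraph F).Reachable (v i) (v (rep i)) :=
      (hparts i (rep i) (hp _) (hp _)).2 (p_rep i).symm
    refine ⟨⟨hsub, hacyclic, ?_, fun u => ?_⟩, reachable_rep⟩
    · simp only [mem_image, mem_univ, true_and, Function.comp_apply, forall_exists_index,
        forall_apply_eq_imp_iff]
      intro i j hij
      have same_part := (hparts (rep i) (rep j) (hp _) (hp _)).1 hij
      rw [p_rep, p_rep] at same_part
      rw [rep_congr i j same_part]
    · obtain ⟨i, -, hui⟩ := hcover u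
      exact ⟨_, mem_image_of_mem _ (mem_univ i), hui.trans (reachable_rep i)⟩
  · rintro ⟨hF, reachable_rep⟩
    refine ⟨hF.subset_edgeSet, hF.isAcyclic, fun i j _ _ => ⟨fun hij => ?_, fun hij => ?_⟩,
      fun u => ?_⟩
    · have same_root := hF.root_unique _ (mem_image_of_mem (v ∘ rep) (mem_univ i)) _
        (mem_image_of_mem (v ∘ rep) (mem_univ j))
        ((reachable_rep i).symm.trans (hij.trans (reachable_rep j)))
      rw [← p_rep i, hv same_root, p_rep]
    · exact (reachable_rep i).trans (rep_congr i j hij ▸ (reachable_rep j).symm)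
    · obtain ⟨s, hs, hus⟩ := hF.exists_root u
      obtain ⟨i, -, rfl⟩ := mem_image.1 hs
      exact ⟨rep i, hp _, hus⟩

theorem isCompatibleForest_iff_of_injective {m : ℕ} {v : Fin m → V} (hv : v.Injective)
    {p : Fin m → Option ℕ} (hp : ∀ l, p l ≠ none) (hinj : p.Injective) {F : Finset (Sym2 V)} :
    IsCompatibleForest G v p F ↔ IsRootedForest G (univ.image v) F := by
  rw [isCompatibleForest_iff hv hp (rep := id) (fun _ => rfl) (fun _ _ h => hinj h),
    Function.comp_id, and_iff_left_iff_imp]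
  exact fun _ _ => .rfl

theorem isCompatibleForest_iff_of_one_part {m : ℕ} {v : Fin m → V} (hv : v.Injective)
    {p : Fin m → Option ℕ} (hp : ∀ l, p l ≠ none) {i : Fin m} (hpi : ∀ l, p i = p l)
    {F : Finset (Sym2 V)} :
    IsCompatibleForest G v p F ↔ IsRootedForest G {v i} F := by
  have roots : univ.image (v ∘ fun _ : Fin m => i) = {v i} := by
    have : Nonempty (Fin m) := ⟨i⟩
    exact image_const univ_nonempty (v i)
  rw [isCompatibleForest_iff hv hp (rep := fun _ => i) hpi (fun _ _ _ => rfl), roots,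
    and_iff_left_iff_imp]
  intro hF l
  simpa using hF.exists_root (v l)

theorem isCompatibleForest_iff_of_same_part {m : ℕ} {v : Fin m → V} (hv : v.Injective)
    {p : Fin m → Option ℕ} (hp : ∀ l, p l ≠ none) {i j k : Fin m}
    (hcover : ∀ l, l = i ∨ l = j ∨ l = k) (hij : p i ≠ p j) (hkj : p k = p j)
    {F : Finset (Sym2 V)} :
    IsCompatibleForest G v p F ↔
      IsRootedForest G {v j, v i} F ∧ (edgeGraph F).Reachable (v k) (v j) := by
  have same_part (l : Fin m) (hl : l ≠ i) : p l = p j := by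
    obtain rfl | rfl | rfl := hcover l
    exacts [absurd rfl hl, rfl, hkj]
  have hji : j ≠ i := by rintro rfl; exact hij rfl
  have hki : k ≠ i := by rintro rfl; exact hij hkj
  have roots : univ.image (v ∘ fun l => if l = i then i else j) = {v j, v i} := by
    ext u
    simp only [mem_image_univ_iff_mem_range, Set.mem_range, Function.comp_apply,
      mem_insert, mem_singleton]
    refine ⟨fun ⟨l, hl⟩ => ?_, ?_⟩
    · split_ifs at hl <;> simp [← hl]
    · rintro (rfl | rfl)
      exacts [⟨j, by simp [hji]⟩, ⟨i, by simp⟩]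
  rw [isCompatibleForest_iff hv hp (rep := fun l => if l = i then i else j)
    (fun l => by grind) (fun l l' => by grind), roots, and_congr_right_iff]
  refine fun _ => ⟨fun h => by simpa [hki] using h k, fun h l => ?_⟩
  obtain rfl | rfl | rfl := hcover l
  · simp
  · simp [hji]
  · simpa [hki] using h

theorem adjugate_groundedLaplacian_eq_of_same_part [DecidableRel G.Adj] (y : Sym2 V → R) {m : ℕ}
    {v : Fin m → V} (hv : v.Injective) {p : Fin m → Option ℕ} (hp : ∀ l, p l ≠ none)
    {i j k : Fin m} (hcover : ∀ l, l = i ∨ l = j ∨ l = k) (hij : p i ≠ p j) (hkj : p k = p j) :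
    (groundedLaplacian (adjWeight G y) {v i}).adjugate (v k) (v j) =
      edgeGenFun y (IsCompatibleForest G v p) := by
  have hne : v j ∉ ({v i} : Finset V) := by
    rw [mem_singleton, hv.eq_iff]
    rintro rfl
    exact hij rfl
  rw [adjugate_groundedLaplacian_adjWeight y _ hne]
  exact edgeGenFun_congr y fun F =>
    (isCompatibleForest_iff_of_same_part hv hp hcover hij hkj).symm

theorem adjugate_groundedLaplacian_self_eq_add [DecidableRel G.Adj] (y : Sym2 V → R) {m : ℕ}
    {v : Fin m → V} (hv : v.Injective) {p q : Fin m → Option ℕ} (hp : ∀ l, p l ≠ none)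
    (hq : ∀ l, q l ≠ none) {i j k : Fin m} (hcover : ∀ l, l = i ∨ l = j ∨ l = k)
    (hpij : p i ≠ p j) (hpkj : p k = p j) (hqij : q i ≠ q j) (hqki : q k = q i) :
    (groundedLaplacian (adjWeight G y) {v i}).adjugate (v j) (v j) =
      edgeGenFun y (IsCompatibleForest G v p) + edgeGenFun y (IsCompatibleForest G v q) := by
  have hne : v j ≠ v i := hv.ne (by rintro rfl; exact hpij rfl)
  rw [Matrix.adjugate_apply, groundedLaplacian_updateRow_single, det_groundedLaplacian_adjWeight,
    edgeGenFun_isRootedForest_eq_sum_reachable y (v k), sum_pair hne]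
  congr 1
  · exact edgeGenFun_congr y fun F =>
      (isCompatibleForest_iff_of_same_part hv hp hcover hpij hpkj).symm
  · rw [pair_comm]
    exact edgeGenFun_congr y fun F =>
      (isCompatibleForest_iff_of_same_part hv hq (fun l => or_left_comm.1 (hcover l))
        hqij.symm hqki).symm

theorem edgeGenFun_dodgson (y : Sym2 V → R) {v : Fin 3 → V} (hv : v.Injective) :
    let Ψ : (Fin 3 → Option ℕ) → R := fun p => edgeGenFun y (IsCompatibleForest G v p)
    Ψ ![some 1, some 1, some 1] * Ψ ![some 1, some 2, some 3] =
      Ψ ![some 1, some 2, some 2] * Ψ ![some 1, some 1, some 2] +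
        Ψ ![some 1, some 2, some 1] * Ψ ![some 1, some 1, some 2] +
          Ψ ![some 1, some 2, some 1] * Ψ ![some 1, some 2, some 2] := by
  classical
  intro Ψ
  set L := groundedLaplacian (adjWeight G y) {v 0} with hL
  have Ψ_111 : L.det = Ψ ![some 1, some 1, some 1] := by
    rw [hL, det_groundedLaplacian_adjWeight]
    exact edgeGenFun_congr y fun F =>
      (isCompatibleForest_iff_of_one_part hv (by decide) (by decide)).symm
  have Ψ_123 : ((L.updateRow (v 1) (Pi.single (v 1) 1)).updateRow (v 2)
      (Pi.single (v 2) 1)).det = Ψ ![some 1, some 2, some 3] := by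
    have marked : ({v 2, v 1, v 0} : Finset V) = univ.image v := by
      ext; simp [Fin.exists_fin_succ, or_comm, or_assoc, eq_comm]
    rw [hL, groundedLaplacian_updateRow_single, groundedLaplacian_updateRow_single,
      det_groundedLaplacian_adjWeight, marked]
    exact edgeGenFun_congr y fun F =>
      (isCompatibleForest_iff_of_injective hv (by decide) (by decide)).symm
  have adj_12 : L.adjugate (v 1) (v 2) = Ψ ![some 1, some 2, some 2] :=
    adjugate_groundedLaplacian_eq_of_same_part y hv (by decide) (by decide) (by decide)
      (by decide)
  have adj_21 : L.adjugate (v 2) (v 1) = Ψ ![some 1, some 2, some 2] :=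
    adjugate_groundedLaplacian_eq_of_same_part y hv (by decide) (by decide) (by decide)
      (by decide)
  have adj_11 : L.adjugate (v 1) (v 1) =
      Ψ ![some 1, some 2, some 2] + Ψ ![some 1, some 2, some 1] :=
    adjugate_groundedLaplacian_self_eq_add y hv (k := 2) (by decide) (by decide) (by decide)
      (by decide) (by decide) (by decide) (by decide)
  have adj_22 : L.adjugate (v 2) (v 2) =
      Ψ ![some 1, some 2, some 2] + Ψ ![some 1, some 1, some 2] :=
    adjugate_groundedLaplacian_self_eq_add y hv (k := 1) (by decide) (by decide) (by decide)
      (by decide) (by decide) (by decide) (by decide)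
  rw [← Ψ_111, ← Ψ_123, det_mul_det_updateRow_updateRow L (hv.ne (by decide)), adj_11, adj_22,
    adj_12, adj_21]
  ring

end CompatibleForest

section ForestPoly

variable {V R : Type*} [Fintype V] [DecidableEq V] [CommRing R] (G : SimpleGraph V)
  [DecidableRel G.Adj] {m : ℕ} (v : Fin m → V) (p : Fin m → Option ℕ)

theorem forestPoly_eq_prod_mul_edgeGenFun {x y : Sym2 V → R}
    (hxy : ∀ e ∈ G.edgeFinset, x e * y e = 1) :
    forestPoly G x v p = (∏ e ∈ G.edgeFinset, x e) * edgeGenFun y (IsCompatibleForest G v p) := by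
  classical
  have hsub (F : Finset (Sym2 V)) (hF : IsCompatibleForest G v p F) :
      F ∈ G.edgeFinset.powerset := by
    rw [mem_powerset, ← coe_subset, SimpleGraph.coe_edgeFinset]
    exact hF.1
  have hfilter : ({F | IsCompatibleForest G v p F} : Finset (Finset (Sym2 V))) =
      {F ∈ G.edgeFinset.powerset | IsCompatibleForest G v p F} := by
    ext F
    simpa using hsub F
  have hcompl (F : Finset (Sym2 V)) (hF : F ∈ G.edgeFinset.powerset) :
      ∏ e ∈ G.edgeFinset \ F, x e = (∏ e ∈ G.edgeFinset, x e) * ∏ e ∈ F, y e := by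
    rw [mem_powerset] at hF
    rw [← prod_sdiff hF, mul_assoc, ← prod_mul_distrib,
      prod_eq_one fun e he => hxy e (hF he), mul_one]
  rw [edgeGenFun, hfilter, sum_filter, forestPoly, mul_sum]
  refine sum_congr rfl fun F hF => ?_
  rw [mul_ite, mul_zero, hcompl F hF]

theorem map_forestPoly {R' : Type*} [CommRing R'] (f : R →+* R') (x : Sym2 V → R) :
    f (forestPoly G x v p) = forestPoly G (f ∘ x) v p := by
  simp only [forestPoly, map_sum, apply_ite f, map_prod, map_zero, Function.comp_apply]

end ForestPoly

/-- **The Dodgson identity as a spanning forest identity** (`m = 3` marked vertices, the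
identity `𝓛_{3,1}(1)`): for any graph `G` with three distinct marked vertices,
`Φ_{(1,1,1)} Φ_{(1,2,3)} = A₁B₃ + A₂B₃ + A₂B₁`, where
`A₁ = B₁ = Φ_{(1,2,2)}`, `A₂ = B₂ = Φ_{(1,2,1)}`, `A₃ = B₃ = Φ_{(1,1,2)}`. -/
theorem dodgson_forest_identity {V : Type*} [Fintype V] [DecidableEq V] {R : Type*}
    [CommRing R] (G : SimpleGraph V) [DecidableRel G.Adj] (x : Sym2 V → R)
    (v : Fin 3 → V) (hv : Function.Injective v) :
    let Φ : (Fin 3 → Option ℕ) → R := fun p => forestPoly G x v p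
    Φ ![some 1, some 1, some 1] * Φ ![some 1, some 2, some 3] =
      Φ ![some 1, some 2, some 2] * Φ ![some 1, some 1, some 2] +
        Φ ![some 1, some 2, some 1] * Φ ![some 1, some 1, some 2] +
          Φ ![some 1, some 2, some 1] * Φ ![some 1, some 2, some 2] := by
  intro Φ
  let A := MvPolynomial (Sym2 V) ℤ
  let ι : A →+* FractionRing A := algebraMap A (FractionRing A)
  let ev : A →+* R := MvPolynomial.eval₂Hom (Int.castRingHom R) x
  let y (e : Sym2 V) : FractionRing A := (ι (MvPolynomial.X e))⁻¹
  have ι_inj : Function.Injective ι := IsFractionRing.injective A (FractionRing A)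
  have hy (e : Sym2 V) : ι (MvPolynomial.X e) * y e = 1 :=
    mul_inv_cancel₀ ((map_ne_zero_iff ι ι_inj).2 (MvPolynomial.X_ne_zero e))
  have Φ_eq_ev (p : Fin 3 → Option ℕ) : Φ p = ev (forestPoly G MvPolynomial.X v p) := by
    have ev_X : ev ∘ MvPolynomial.X = x := funext (MvPolynomial.eval₂Hom_X' _ x)
    rw [map_forestPoly, ev_X]
  have ι_forestPoly (p : Fin 3 → Option ℕ) : ι (forestPoly G MvPolynomial.X v p) =
      (∏ e ∈ G.edgeFinset, ι (MvPolynomial.X e)) * edgeGenFun y (IsCompatibleForest G v p) := by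
    rw [map_forestPoly]
    exact forestPoly_eq_prod_mul_edgeGenFun G v p fun e _ => hy e
  simp only [Φ_eq_ev, ← map_mul, ← map_add]
  refine congrArg ev (ι_inj ?_)
  simp only [map_mul, map_add, ι_forestPoly]
  linear_combination (∏ e ∈ G.edgeFinset, ι (MvPolynomial.X e)) ^ 2 * edgeGenFun_dodgson y hv
end

section
/- For m = 4 marked vertices on any graph G, the identity Φ_{(1,1,1,1)} Φ_{(1,2,3,4)} = A_4(B_1+B_4+B_5+B_6) + A_1(B_4+B_6) + A_2(B_4+B_5) holds, where A_1 = Φ_{(1,1,2,3)}, A_2 = Φ_{(1,2,1,3)}, A_4 = Φ_{(1,2,3,1)}, B_1 = Φ_{(1,1,1,2)}, B_4 = Φ_{(1,2,2,2)}, B_5 = Φ_{(1,1,2,2)}, B_6 = Φ_{(1,2,1,2)}. -/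
open Finset

/-!
Fix a vertex `r`. For a set `S` of vertices containing `r`, let `φ z` be the total weight of the
forests rooted at `S` in which `z` lies in the tree of `r`. In a forest with a path from `r` to `t`,
the differences of `φ` along the edges of the path add up to `φ r - φ t`. For an edge `uw` of `G`,
the difference `φ u - φ w` counts forests rooted at `S` in which `r` reaches `u` but another root
`s` reaches `w`, minus those with `u` and `w` exchanged. Inserting `uw` turns these into forests
rooted at `S \ {s}` whose path from `r` to `s` runs through `uw`; let `I_S(uw)` be their weight,
summed over `s`. Hence, for a second set `T` and `W` the total weight of the indicated forests,
`∑ t, W(T \ {t}; r ~ t) * W(S; r ≁ t)` is the sum over oriented edges of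
`x_uw * I_T(uw) * (I_S(uw) - I_S(wu))`. Reversing the edges shows that this is symmetric in `S` and
`T`. The theorem is the case where `S` consists of all marked vertices, `T` of the first and the
last, and `r` is the first.
-/

namespace SpanningForest

open SimpleGraph

section Graph

variable {V : Type*} {H : SimpleGraph V} {a b u w : V}

theorem reachable_sup_edge_iff :
    (H ⊔ edge u w).Reachable a b ↔ H.Reachable a b ∨
      (H.Reachable a u ∧ H.Reachable w b) ∨ (H.Reachable a w ∧ H.Reachable u b) := by
  constructor
  · rintro ⟨p⟩
    induction p with
    | nil => exact .inl .rfl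
    | cons h p ih =>
      rw [sup_adj, edge_adj] at h
      rcases h with h | ⟨⟨rfl, rfl⟩ | ⟨rfl, rfl⟩, -⟩
      · have := h.reachable
        exact ih.imp this.trans (Or.imp (And.imp_left this.trans) (And.imp_left this.trans))
      · rcases ih with ih | ih | ih
        exacts [.inr (.inl ⟨.rfl, ih⟩), .inr (.inl ⟨.rfl, ih.2⟩), .inl ih.2]
      · rcases ih with ih | ih | ih
        exacts [.inr (.inr ⟨.rfl, ih⟩), .inl ih.2, .inr (.inr ⟨.rfl, ih.2⟩)]
  · have hle : H ≤ H ⊔ edge u w := le_sup_left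
    have huw : (H ⊔ edge u w).Reachable u w := by
      rcases eq_or_ne u w with rfl | hne
      · exact .rfl
      · exact Adj.reachable (.inr ((edge_adj ..).2 ⟨.inl ⟨rfl, rfl⟩, hne⟩))
    rintro (h | ⟨hau, hwb⟩ | ⟨haw, hub⟩)
    · exact h.mono hle
    · exact ((hau.mono hle).trans huw).trans (hwb.mono hle)
    · exact ((haw.mono hle).trans huw.symm).trans (hub.mono hle)

theorem fromEdgeSet_insert [DecidableEq V] (F : Finset (Sym2 V)) (u w : V) :
    fromEdgeSet ((insert s(u, w) F : Finset (Sym2 V)) : Set (Sym2 V)) =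
      fromEdgeSet (F : Set (Sym2 V)) ⊔ edge u w := by
  rw [coe_insert, Set.insert_eq, edge, fromEdgeSet_union, sup_comm]

theorem fromEdgeSet_le_of_mem_powerset {G : SimpleGraph V} [Fintype G.edgeSet]
    {F : Finset (Sym2 V)} (hF : F ∈ G.edgeFinset.powerset) :
    fromEdgeSet (F : Set (Sym2 V)) ≤ G := by
  rw [mem_powerset, ← coe_subset, coe_edgeFinset] at hF
  exact (fromEdgeSet_mono hF).trans_eq G.fromEdgeSet_edgeSet

/-- `Traverses H a b u w` says that, when `H` is a forest, its path from `a` to `b` runs along the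
edge `uw` in the direction from `u` to `w`. It is encoded without paths: deleting the edge `uw`
leaves `a` on the side of `u` and `b` on the side of `w`. -/
def Traverses (H : SimpleGraph V) (a b u w : V) : Prop :=
  H.Adj u w ∧ (H.deleteEdges {s(u, w)}).Reachable a u ∧ (H.deleteEdges {s(u, w)}).Reachable w b

theorem Traverses.reachable (h : Traverses H a b u w) : H.Reachable a b :=
  have hle : H.deleteEdges {s(u, w)} ≤ H := deleteEdges_le _
  ((h.2.1.mono hle).trans h.1.reachable).trans (h.2.2.mono hle)

theorem traverses_sup_edge_iff (hne : u ≠ w) (hadj : ¬H.Adj u w) :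
    Traverses (H ⊔ edge u w) a b u w ↔ H.Reachable a u ∧ H.Reachable w b := by
  have hdel : (H ⊔ edge u w).deleteEdges {s(u, w)} = H := by
    simp [deleteEdges_sup, hadj]
  simp [Traverses, hdel, edge_adj, hne]

theorem traverses_of_mem_darts {p : H.Walk a b} (hp : p.IsPath) {d : H.Dart} (hd : d ∈ p.darts) :
    Traverses H a b d.fst d.snd := by
  induction p with
  | nil => simp at hd
  | @cons a c b hac p ih =>
    rw [Walk.cons_isPath_iff] at hp
    rw [Walk.darts_cons, List.mem_cons] at hd
    rcases hd with rfl | hd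
    · have hedge : s(a, c) ∉ p.edges := fun h ↦ hp.2 (p.fst_mem_support_of_mem_edges h)
      exact ⟨hac, .rfl, (p.toDeleteEdge _ hedge).reachable⟩
    · obtain ⟨hadj, hcu, hwb⟩ := ih hp.1 hd
      have hmem : d.edge ∈ p.edges := List.mem_map_of_mem hd
      have hedge : s(a, c) ≠ d.edge := fun h ↦
        hp.2 (p.fst_mem_support_of_mem_edges (h ▸ hmem))
      have hac' : (H.deleteEdges {d.edge}).Adj a c := deleteEdges_adj.2 ⟨hac, hedge⟩
      exact ⟨hadj, hac'.reachable.trans hcu, hwb⟩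

theorem traverses_iff_mem_darts (hH : H.IsAcyclic) {p : H.Walk a b} (hp : p.IsPath) {d : H.Dart} :
    Traverses H a b d.fst d.snd ↔ d ∈ p.darts := by
  refine ⟨fun ⟨hadj, hau, hwb⟩ ↦ ?_, traverses_of_mem_darts hp⟩
  have hbridge : ¬(H.deleteEdges {s(d.fst, d.snd)}).Reachable d.fst d.snd :=
    isAcyclic_iff_forall_adj_isBridge.1 hH hadj
  by_contra hd
  have hsymm : d.symm ∉ p.darts := fun h ↦ by
    have haw : (H.deleteEdges {s(d.snd, d.fst)}).Reachable a d.snd :=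
      (traverses_of_mem_darts hp h).2.1
    rw [Sym2.eq_swap] at haw
    exact hbridge (hau.symm.trans haw)
  have hedge : s(d.fst, d.snd) ∉ p.edges := fun h ↦ by
    obtain ⟨d', hd', h⟩ := List.mem_map.1 h
    rcases (dart_edge_eq_iff d' d).1 h with rfl | rfl
    exacts [hd hd', hsymm hd']
  exact hbridge ((hau.symm.trans (p.toDeleteEdge _ hedge).reachable).trans hwb.symm)

theorem sum_map_darts_sub {R : Type*} [AddCommGroup R] (p : H.Walk a b) (φ : V → R) :
    (p.darts.map fun d ↦ φ d.fst - φ d.snd).sum = φ a - φ b := by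
  induction p with
  | nil => simp
  | cons h p ih => simp [ih]

open Classical in
theorem sum_traverses_sub {R : Type*} [AddCommGroup R] {G : SimpleGraph V} [Fintype G.Dart]
    (hHG : H ≤ G) (hH : H.IsAcyclic) (hab : H.Reachable a b) (φ : V → R) :
    ∑ d : G.Dart with Traverses H a b d.fst d.snd, (φ d.fst - φ d.snd) = φ a - φ b := by
  obtain ⟨p, hp⟩ := hab.exists_isPath
  have hmem (d : G.Dart) : Traverses H a b d.fst d.snd ↔ d ∈ (p.mapLe hHG).darts := by
    simp only [Walk.darts_map, List.mem_map]
    constructor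
    · intro h
      exact ⟨⟨d.toProd, h.1⟩, (traverses_iff_mem_darts hH hp (d := ⟨d.toProd, h.1⟩)).1 h, rfl⟩
    · rintro ⟨d, hd, rfl⟩
      exact traverses_of_mem_darts hp hd
  have hnodup : (p.mapLe hHG).darts.Nodup :=
    Walk.darts_nodup_of_support_nodup (hp.mapLe hHG).support_nodup
  rw [← sum_map_darts_sub (p.mapLe hHG) φ, ← List.sum_toFinset _ hnodup]
  congr 1
  ext d
  simp [hmem]

end Graph

section RootedForest

variable {V : Type*} {H : SimpleGraph V} {S : Finset V} {r s t u w z : V}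

/-- `H` is a spanning forest each of whose trees contains exactly one vertex of `S`, its root. -/
structure IsRootedForest (H : SimpleGraph V) (S : Finset V) : Prop where
  isAcyclic : H.IsAcyclic
  exists_root : ∀ z, ∃ r ∈ S, H.Reachable r z
  eq_of_reachable : ∀ r ∈ S, ∀ s ∈ S, H.Reachable r s → r = s

theorem IsRootedForest.eq_of_reachable_of_reachable (hH : IsRootedForest H S) (hs : s ∈ S)
    (ht : t ∈ S) (hsz : H.Reachable s z) (htz : H.Reachable t z) : s = t :=
  hH.eq_of_reachable s hs t ht (hsz.trans htz.symm)

theorem IsRootedForest.reachable_of_singleton (hH : IsRootedForest H {r}) : H.Reachable r z := by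
  simpa using hH.exists_root z

variable [DecidableEq V]

theorem IsRootedForest.not_reachable_iff (hH : IsRootedForest H S) (hr : r ∈ S) :
    ¬H.Reachable r z ↔ ∃ s ∈ S.erase r, H.Reachable s z := by
  constructor
  · intro hrz
    obtain ⟨s, hs, hsz⟩ := hH.exists_root z
    exact ⟨s, mem_erase.2 ⟨by rintro rfl; exact hrz hsz, hs⟩, hsz⟩
  · rintro ⟨s, hs, hsz⟩ hrz
    exact ne_of_mem_erase hs
      (hH.eq_of_reachable_of_reachable (mem_of_mem_erase hs) hr hsz hrz)

theorem IsRootedForest.sup_edge (hH : IsRootedForest H S) (hr : r ∈ S) (hs : s ∈ S) (hrs : r ≠ s)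
    (hru : H.Reachable r u) (hsw : H.Reachable s w) :
    IsRootedForest (H ⊔ edge u w) (S.erase s) where
  isAcyclic := hH.isAcyclic.sup_edge_of_not_reachable fun huw ↦
    hrs (hH.eq_of_reachable_of_reachable hr hs (hru.trans huw) hsw)
  exists_root z := by
    obtain ⟨q, hq, hqz⟩ := hH.exists_root z
    rcases eq_or_ne q s with rfl | hqs
    · exact ⟨r, mem_erase.2 ⟨hrs, hr⟩,
        reachable_sup_edge_iff.2 (.inr (.inl ⟨hru, hsw.symm.trans hqz⟩))⟩
    · exact ⟨q, mem_erase.2 ⟨hqs, hq⟩, hqz.mono le_sup_left⟩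
  eq_of_reachable p hp q hq hpq := by
    obtain ⟨hps, hp⟩ := mem_erase.1 hp
    obtain ⟨hqs, hq⟩ := mem_erase.1 hq
    rcases reachable_sup_edge_iff.1 hpq with hpq | ⟨-, hwq⟩ | ⟨hpw, -⟩
    · exact hH.eq_of_reachable p hp q hq hpq
    · exact absurd (hH.eq_of_reachable_of_reachable hq hs hwq.symm hsw) hqs
    · exact absurd (hH.eq_of_reachable_of_reachable hp hs hpw hsw) hps

theorem IsRootedForest.of_sup_edge (hH : IsRootedForest (H ⊔ edge u w) (S.erase s)) (hr : r ∈ S)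
    (hs : s ∈ S) (hrs : r ≠ s) (hne : u ≠ w) (hadj : ¬H.Adj u w) (hru : H.Reachable r u)
    (hsw : H.Reachable s w) : IsRootedForest H S := by
  have huw : ¬H.Reachable u w := fun huw ↦
    ((isAcyclic_sup_fromEdgeSet_iff.1 hH.isAcyclic).2 huw).elim hne hadj
  have hroot {q : V} (hq : q ∈ S) : ¬ (q ≠ s ∧ H.Reachable q s) := by
    rintro ⟨hqs, hqs'⟩
    have hqr : (H ⊔ edge u w).Reachable r q :=
      reachable_sup_edge_iff.2 (.inr (.inl ⟨hru, hsw.symm.trans hqs'.symm⟩))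
    obtain rfl := hH.eq_of_reachable r (mem_erase.2 ⟨hrs, hr⟩) q (mem_erase.2 ⟨hqs, hq⟩) hqr
    exact huw ((hru.symm.trans hqs').trans hsw)
  refine ⟨hH.isAcyclic.anti le_sup_left, fun z ↦ ?_, fun p hp q hq hpq ↦ ?_⟩
  · obtain ⟨q, hq, hqz⟩ := hH.exists_root z
    rcases reachable_sup_edge_iff.1 hqz with hqz | ⟨-, hwz⟩ | ⟨-, huz⟩
    exacts [⟨q, mem_of_mem_erase hq, hqz⟩, ⟨s, hs, hsw.trans hwz⟩, ⟨r, hr, hru.trans huz⟩]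
  · by_cases hps : p = s <;> by_cases hqs : q = s
    · exact hps.trans hqs.symm
    · exact absurd ⟨hqs, hps ▸ hpq.symm⟩ (hroot hq)
    · exact absurd ⟨hps, hqs ▸ hpq⟩ (hroot hp)
    · exact hH.eq_of_reachable p (mem_erase.2 ⟨hps, hp⟩) q (mem_erase.2 ⟨hqs, hq⟩)
        (hpq.mono le_sup_left)

theorem isRootedForest_and_reachable_iff (hr : r ∈ S) (hs : s ∈ S) (hrs : r ≠ s) (hne : u ≠ w)
    (hadj : ¬H.Adj u w) :
    IsRootedForest H S ∧ H.Reachable r u ∧ H.Reachable s w ↔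
      IsRootedForest (H ⊔ edge u w) (S.erase s) ∧ Traverses (H ⊔ edge u w) r s u w := by
  rw [traverses_sup_edge_iff hne hadj, reachable_comm (u := w)]
  exact and_congr_left fun ⟨hru, hsw⟩ ↦ ⟨fun hH ↦ hH.sup_edge hr hs hrs hru hsw,
    fun hH ↦ hH.of_sup_edge hr hs hrs hne hadj hru hsw⟩

end RootedForest

section SpanningSum

variable {V : Type*} [Fintype V] [DecidableEq V] {R : Type*} [CommRing R] (G : SimpleGraph V)
  [DecidableRel G.Adj] (x : Sym2 V → R)

open Classical in
/-- The sum of `∏ e ∉ H, x e` over all spanning subgraphs `H` of `G` satisfying `P`. Spanning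
subgraphs are indexed by their edge sets, as in `forestPoly`. -/
noncomputable def spanningSum (P : SimpleGraph V → Prop) : R :=
  ∑ F ∈ G.edgeFinset.powerset with P (fromEdgeSet (F : Finset (Sym2 V))),
    ∏ e ∈ G.edgeFinset \ F, x e

variable {G x} {P Q : SimpleGraph V → Prop}

theorem spanningSum_congr (h : ∀ H, P H ↔ Q H) : spanningSum G x P = spanningSum G x Q :=
  congrArg _ (funext fun H ↦ propext (h H))

theorem spanningSum_and_add_and_not (P Q : SimpleGraph V → Prop) :
    spanningSum G x (fun H ↦ P H ∧ Q H) + spanningSum G x (fun H ↦ P H ∧ ¬Q H) =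
      spanningSum G x P := by
  classical
  unfold spanningSum
  refine .trans ?_ (sum_filter_add_sum_filter_not _ (fun F : Finset (Sym2 V) ↦ Q (fromEdgeSet F)) _)
  rw [filter_filter, filter_filter]
  congr!

theorem spanningSum_eq_sum {ι : Type*} {T : Finset ι} {Q : ι → SimpleGraph V → Prop}
    (hPQ : ∀ H, P H ↔ ∃ i ∈ T, Q i H)
    (hdisj : ∀ H, ∀ i ∈ T, ∀ j ∈ T, Q i H → Q j H → i = j) :
    spanningSum G x P = ∑ i ∈ T, spanningSum G x (Q i) := by
  classical
  unfold spanningSum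
  rw [← sum_biUnion]
  · congr 1
    ext F
    simp only [hPQ, mem_filter, mem_biUnion]
    tauto
  · intro i hi j hj hij
    exact disjoint_filter.2 fun F _ hFi hFj ↦ hij (hdisj _ i hi j hj hFi hFj)

theorem spanningSum_eq_mul {u w : V} (huw : G.Adj u w) (hP : ∀ H, P H → ¬H.Adj u w)
    (hQ : ∀ H, Q H → H.Adj u w) (hPQ : ∀ H, ¬H.Adj u w → (P H ↔ Q (H ⊔ edge u w))) :
    spanningSum G x P = x s(u, w) * spanningSum G x Q := by
  have hadj (F : Finset (Sym2 V)) : (fromEdgeSet (F : Set (Sym2 V))).Adj u w ↔ s(u, w) ∈ F := by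
    simp [huw.ne]
  have he : s(u, w) ∈ G.edgeFinset := mem_edgeFinset.2 huw
  unfold spanningSum
  rw [mul_sum]
  refine sum_bij' (fun F _ ↦ insert s(u, w) F) (fun F _ ↦ F.erase s(u, w)) ?_ ?_ ?_ ?_ ?_ <;>
    simp only [mem_filter, mem_powerset, and_imp]
  · intro F hF hPF
    rw [fromEdgeSet_insert]
    exact ⟨insert_subset he hF, (hPQ _ (hP _ hPF)).1 hPF⟩
  · intro F hF hQF
    refine ⟨(erase_subset ..).trans hF, (hPQ _ ((hadj _).not.2 (notMem_erase s(u, w) F))).2 ?_⟩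
    rwa [← fromEdgeSet_insert, insert_erase ((hadj F).1 (hQ _ hQF))]
  · intro F _ hPF
    exact erase_insert ((hadj F).not.1 (hP _ hPF))
  · intro F _ hQF
    exact insert_erase ((hadj F).1 (hQ _ hQF))
  · intro F _ hPF
    rw [Finset.sdiff_insert G.edgeFinset F s(u, w)]
    exact (mul_prod_erase (G.edgeFinset \ F) x (mem_sdiff.2 ⟨he, (hadj F).not.1 (hP _ hPF)⟩)).symm

theorem spanningSum_mul_sub {a b : V} (hP : ∀ H, P H → H.IsAcyclic ∧ H.Reachable a b) (φ : V → R) :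
    spanningSum G x P * (φ a - φ b) =
      ∑ d : G.Dart, spanningSum G x (fun H ↦ P H ∧ Traverses H a b d.fst d.snd) *
        (φ d.fst - φ d.snd) := by
  classical
  have hfilter (d : G.Dart) : spanningSum G x (fun H ↦ P H ∧ Traverses H a b d.fst d.snd) =
      ∑ F ∈ G.edgeFinset.powerset with P (fromEdgeSet (F : Finset (Sym2 V))),
        if Traverses (fromEdgeSet (F : Set (Sym2 V))) a b d.fst d.snd then
          ∏ e ∈ G.edgeFinset \ F, x e else 0 := by
    rw [← sum_filter, filter_filter, spanningSum]
    congr!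
  simp_rw [hfilter, sum_mul, ite_mul, zero_mul]
  rw [sum_comm, spanningSum, sum_mul]
  refine sum_congr (by congr!) fun F hF ↦ ?_
  obtain ⟨hF, hPF⟩ := mem_filter.1 hF
  rw [← sum_filter, ← mul_sum,
    sum_traverses_sub (fromEdgeSet_le_of_mem_powerset hF) (hP _ hPF).1 (hP _ hPF).2 φ]

end SpanningSum

section Reciprocity

variable {V : Type*} [Fintype V] [DecidableEq V] {R : Type*} [CommRing R] (G : SimpleGraph V)
  [DecidableRel G.Adj] (x : Sym2 V → R) (S T : Finset V) (r u w : V)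

/-- The forest polynomial of the root set `S` with one root `s ≠ r` dropped and its vertex attached
to the tree of `r`, summed over `s`, where only the forests whose path from `r` to `s` runs through
the edge `uw` from `u` to `w` are counted. -/
noncomputable def rootCurrent : R :=
  ∑ s ∈ S.erase r,
    spanningSum G x fun H ↦ IsRootedForest H (S.erase s) ∧ Traverses H r s u w

variable {G S T r u w} {s t : V}

theorem spanningSum_reachable_and_not_reachable (huw : G.Adj u w) (hr : r ∈ S) :
    spanningSum G x (fun H ↦ (IsRootedForest H S ∧ H.Reachable r u) ∧ ¬H.Reachable r w) =
      x s(u, w) * rootCurrent G x S r u w := by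
  rw [rootCurrent, mul_sum, spanningSum_eq_sum (T := S.erase r)
    (Q := fun s H ↦ IsRootedForest H S ∧ H.Reachable r u ∧ H.Reachable s w)]
  · refine sum_congr rfl fun s hs ↦ ?_
    obtain ⟨hsr, hs⟩ := mem_erase.1 hs
    refine spanningSum_eq_mul huw ?_ (fun H hH ↦ hH.2.1) fun H hadj ↦
      isRootedForest_and_reachable_iff hr hs hsr.symm huw.ne hadj
    rintro H ⟨hH, hru, hsw⟩ hadj
    exact hsr (hH.eq_of_reachable_of_reachable hs hr hsw (hru.trans hadj.reachable))
  · intro H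
    constructor
    · rintro ⟨⟨hH, hru⟩, hrw⟩
      obtain ⟨s, hs, hsw⟩ := (hH.not_reachable_iff hr).1 hrw
      exact ⟨s, hs, hH, hru, hsw⟩
    · rintro ⟨s, hs, hH, hru, hsw⟩
      exact ⟨⟨hH, hru⟩, (hH.not_reachable_iff hr).2 ⟨s, hs, hsw⟩⟩
  · rintro H s hs t ht ⟨hH, -, hsw⟩ ⟨-, -, htw⟩
    exact hH.eq_of_reachable_of_reachable (mem_of_mem_erase hs) (mem_of_mem_erase ht) hsw htw

theorem spanningSum_reachable_sub (huw : G.Adj u w) (hr : r ∈ S) :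
    spanningSum G x (fun H ↦ IsRootedForest H S ∧ H.Reachable r u) -
      spanningSum G x (fun H ↦ IsRootedForest H S ∧ H.Reachable r w) =
        x s(u, w) * (rootCurrent G x S r u w - rootCurrent G x S r w u) := by
  have hsplit (a b : V) :
      spanningSum G x (fun H ↦ (IsRootedForest H S ∧ H.Reachable r a) ∧ H.Reachable r b) +
        spanningSum G x (fun H ↦ (IsRootedForest H S ∧ H.Reachable r a) ∧ ¬H.Reachable r b) =
          spanningSum G x (fun H ↦ IsRootedForest H S ∧ H.Reachable r a) :=
    spanningSum_and_add_and_not _ _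
  rw [← hsplit u w, ← hsplit w u, spanningSum_reachable_and_not_reachable x huw hr,
    spanningSum_reachable_and_not_reachable x huw.symm hr, Sym2.eq_swap (a := w),
    spanningSum_congr fun H ↦ and_right_comm (b := H.Reachable r w)]
  ring

theorem spanningSum_mul_not_reachable (hr : r ∈ S) :
    spanningSum G x (fun H ↦ IsRootedForest H T ∧ H.Reachable r t) *
        spanningSum G x (fun H ↦ IsRootedForest H S ∧ ¬H.Reachable r t) =
      ∑ d : G.Dart,
        spanningSum G x (fun H ↦ IsRootedForest H T ∧ Traverses H r t d.fst d.snd) *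
          (x d.edge * (rootCurrent G x S r d.fst d.snd - rootCurrent G x S r d.snd d.fst)) := by
  let φ (z : V) : R := spanningSum G x fun H ↦ IsRootedForest H S ∧ H.Reachable r z
  have hφ : spanningSum G x (fun H ↦ IsRootedForest H S ∧ ¬H.Reachable r t) = φ r - φ t := by
    have hroot : φ r = spanningSum G x fun H ↦ IsRootedForest H S :=
      spanningSum_congr fun H ↦ and_iff_left .rfl
    rw [hroot, eq_sub_iff_add_eq', spanningSum_and_add_and_not]
  rw [hφ, spanningSum_mul_sub (fun H hH ↦ ⟨hH.1.isAcyclic, hH.2⟩)]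
  refine sum_congr rfl fun d _ ↦ ?_
  congr 1
  · exact spanningSum_congr fun H ↦ by
      rw [and_assoc, and_iff_right_of_imp (a := H.Reachable r t) Traverses.reachable]
  · exact spanningSum_reachable_sub x d.adj hr

theorem sum_spanningSum_mul_not_reachable (hr : r ∈ S) :
    ∑ t ∈ T.erase r,
        spanningSum G x (fun H ↦ IsRootedForest H (T.erase t) ∧ H.Reachable r t) *
          spanningSum G x (fun H ↦ IsRootedForest H S ∧ ¬H.Reachable r t) =
      ∑ d : G.Dart, rootCurrent G x T r d.fst d.snd *
        (x d.edge * (rootCurrent G x S r d.fst d.snd - rootCurrent G x S r d.snd d.fst)) := by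
  simp_rw [spanningSum_mul_not_reachable x hr, rootCurrent, sum_mul]
  exact sum_comm

theorem sum_spanningSum_mul_not_reachable_comm (hrS : r ∈ S) (hrT : r ∈ T) :
    ∑ t ∈ T.erase r,
        spanningSum G x (fun H ↦ IsRootedForest H (T.erase t) ∧ H.Reachable r t) *
          spanningSum G x (fun H ↦ IsRootedForest H S ∧ ¬H.Reachable r t) =
      ∑ s ∈ S.erase r,
        spanningSum G x (fun H ↦ IsRootedForest H (S.erase s) ∧ H.Reachable r s) *
          spanningSum G x (fun H ↦ IsRootedForest H T ∧ ¬H.Reachable r s) := by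
  rw [sum_spanningSum_mul_not_reachable x hrS, sum_spanningSum_mul_not_reachable x hrT]
  let I (U : Finset V) (d : G.Dart) : R := rootCurrent G x U r d.fst d.snd
  have hswap : ∑ d : G.Dart, I T d * (x d.edge * I S d.symm) =
      ∑ d : G.Dart, I S d * (x d.edge * I T d.symm) := by
    rw [← Equiv.sum_comp Dart.symm_involutive.toPerm]
    refine sum_congr rfl fun d _ ↦ ?_
    rw [Function.Involutive.coe_toPerm, Dart.symm_symm, Dart.edge_symm]
    ring
  calc
    ∑ d, I T d * (x d.edge * (I S d - I S d.symm)) =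
        ∑ d, I T d * (x d.edge * I S d) - ∑ d, I T d * (x d.edge * I S d.symm) := by
      simp_rw [mul_sub, sum_sub_distrib]
    _ = ∑ d, I S d * (x d.edge * I T d) - ∑ d, I S d * (x d.edge * I T d.symm) := by
      simp_rw [hswap, mul_left_comm (I T _), mul_comm (I T _), mul_left_comm (I S _)]
    _ = ∑ d, I S d * (x d.edge * (I T d - I T d.symm)) := by
      simp_rw [mul_sub, sum_sub_distrib]

theorem spanningSum_not_reachable_of_mem (hr : r ∈ S) (hs : s ∈ S) (hrs : r ≠ s) :
    spanningSum G x (fun H ↦ IsRootedForest H S ∧ ¬H.Reachable r s) =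
      spanningSum G x fun H ↦ IsRootedForest H S :=
  spanningSum_congr fun _ ↦ and_iff_left_of_imp fun hH h ↦ hrs (hH.eq_of_reachable r hr s hs h)

theorem spanningSum_singleton_mul (hr : r ∈ S) (ht : t ∈ S) (hrt : r ≠ t) :
    spanningSum G x (fun H ↦ IsRootedForest H {r}) *
        spanningSum G x (fun H ↦ IsRootedForest H S) =
      ∑ s ∈ S.erase r,
        spanningSum G x (fun H ↦ IsRootedForest H (S.erase s) ∧ H.Reachable r s) *
          spanningSum G x (fun H ↦ IsRootedForest H {r, t} ∧ ¬H.Reachable r s) := by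
  have hr' : ({r, t} : Finset V).erase r = {t} := erase_insert (by simpa using hrt)
  have ht' : ({r, t} : Finset V).erase t = {r} := by
    rw [pair_comm, erase_insert (by simpa using hrt.symm)]
  rw [← sum_spanningSum_mul_not_reachable_comm x hr (mem_insert_self ..), hr', sum_singleton, ht',
    spanningSum_not_reachable_of_mem x hr ht hrt,
    spanningSum_congr fun H ↦ and_iff_left_of_imp IsRootedForest.reachable_of_singleton]

end Reciprocity

section ForestPoly

variable {V : Type*} [Fintype V] [DecidableEq V] {R : Type*} [CommRing R] {G : SimpleGraph V}
  [DecidableRel G.Adj] {x : Sym2 V → R} {m : ℕ} {v : Fin m → V} {p : Fin m → Option ℕ}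

theorem forestPoly_eq_spanningSum_image (hv : Function.Injective v) (hp : ∀ i, p i ≠ none)
    {I : Finset (Fin m)} (hI : ∀ i, ∃ k ∈ I, p i = p k)
    (hinj : ∀ k ∈ I, ∀ l ∈ I, p k = p l → k = l) :
    forestPoly G x v p = spanningSum G x fun H ↦
      IsRootedForest H (I.image v) ∧ ∀ i, ∀ k ∈ I, p i = p k → H.Reachable (v k) (v i) := by
  rw [forestPoly, spanningSum, sum_filter]
  refine sum_congr rfl fun F hF ↦ ?_
  have hFG : (F : Set (Sym2 V)) ⊆ G.edgeSet := by
    rwa [← coe_edgeFinset, coe_subset, ← mem_powerset]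
  congr 1
  simp only [IsCompatibleForest, hFG, hp, ne_eq, not_false_eq_true, true_and, forall_const,
    eq_iff_iff]
  generalize fromEdgeSet (F : Set (Sym2 V)) = H
  constructor
  · rintro ⟨hH, hreach, hroot⟩
    refine ⟨⟨hH, fun z ↦ ?_, ?_⟩, fun i k _ hik ↦ (hreach k i).2 hik.symm⟩
    · obtain ⟨i, hzi⟩ := hroot z
      obtain ⟨k, hk, hik⟩ := hI i
      exact ⟨v k, mem_image_of_mem v hk, ((hreach k i).2 hik.symm).trans hzi.symm⟩
    · simp only [forall_mem_image]
      exact fun k hk l hl hkl ↦ congrArg v (hinj k hk l hl ((hreach k l).1 hkl))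
  · rintro ⟨hH, hreach⟩
    refine ⟨hH.isAcyclic, fun i j ↦ ?_, fun z ↦ ?_⟩
    · obtain ⟨k, hk, hik⟩ := hI i
      obtain ⟨l, hl, hjl⟩ := hI j
      refine ⟨fun hij ↦ ?_, fun hij ↦ ?_⟩
      · rw [hik, hjl, hv (hH.eq_of_reachable_of_reachable (mem_image_of_mem v hk)
          (mem_image_of_mem v hl) ((hreach i k hk hik).trans hij) (hreach j l hl hjl))]
      · exact (hreach i k hk hik).symm.trans (hreach j k hk (hij ▸ hik))
    · obtain ⟨k, -, hkz⟩ := exists_mem_image.1 (hH.exists_root z)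
      exact ⟨k, hkz.symm⟩

theorem forestPoly_of_injective (hv : Function.Injective v) (hp : ∀ i, p i ≠ none)
    (hinj : Function.Injective p) :
    forestPoly G x v p = spanningSum G x fun H ↦ IsRootedForest H (univ.image v) := by
  rw [forestPoly_eq_spanningSum_image hv hp (I := univ) (fun i ↦ ⟨i, mem_univ i, rfl⟩)
    fun k _ l _ h ↦ hinj h]
  exact spanningSum_congr fun H ↦ and_iff_left fun i k _ hik ↦ hinj hik ▸ .rfl

theorem forestPoly_of_merge (hv : Function.Injective v) (hp : ∀ i, p i ≠ none) {j k : Fin m}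
    (hkj : k ≠ j) (hpkj : p k = p j) (hinj : ∀ i ≠ j, ∀ l ≠ j, p i = p l → i = l) :
    forestPoly G x v p = spanningSum G x fun H ↦
      IsRootedForest H ((univ.image v).erase (v j)) ∧ H.Reachable (v k) (v j) := by
  have hinj' : ∀ i ∈ univ.erase j, ∀ l ∈ univ.erase j, p i = p l → i = l := by
    simpa using hinj
  have hk : k ∈ univ.erase j := mem_erase.2 ⟨hkj, mem_univ k⟩
  rw [forestPoly_eq_spanningSum_image hv hp (I := univ.erase j) (fun i ↦ ?_) hinj', image_erase hv]
  · refine spanningSum_congr fun H ↦ and_congr_right fun _ ↦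
      ⟨fun h ↦ h j k hk hpkj.symm, fun hkj' i l hl hil ↦ ?_⟩
    rcases eq_or_ne i j with rfl | hij
    · rwa [hinj' l hl k hk (hil.symm.trans hpkj.symm)]
    · rw [hinj' i (mem_erase.2 ⟨hij, mem_univ i⟩) l hl hil]
  · rcases eq_or_ne i j with rfl | hij
    exacts [⟨k, hk, hpkj.symm⟩, ⟨i, mem_erase.2 ⟨hij, mem_univ i⟩, rfl⟩]

theorem forestPoly_of_const (hv : Function.Injective v) (hp : ∀ i, p i ≠ none) {k : Fin m}
    (hpk : ∀ i, p i = p k) :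
    forestPoly G x v p = spanningSum G x fun H ↦ IsRootedForest H {v k} := by
  rw [forestPoly_eq_spanningSum_image hv hp (I := {k}) (by simpa using hpk) (by simp),
    image_singleton]
  exact spanningSum_congr fun H ↦ and_iff_left_of_imp fun hH ↦ by simp [hH.reachable_of_singleton]

theorem forestPoly_of_two_parts (hv : Function.Injective v) (hp : ∀ i, p i ≠ none) {k l : Fin m}
    (hkl : p k ≠ p l) (hpkl : ∀ i, p i = p k ∨ p i = p l) :
    forestPoly G x v p = spanningSum G x fun H ↦
      IsRootedForest H {v k, v l} ∧ ∀ i, H.Reachable (v k) (v i) ↔ p i = p k := by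
  rw [forestPoly_eq_spanningSum_image hv hp (I := {k, l}) (by simpa using hpkl)
    (by simp [hkl, hkl.symm]), image_insert, image_singleton]
  refine spanningSum_congr fun H ↦ and_congr_right fun hH ↦ forall_congr' fun i ↦ ?_
  have hvkl : v l ≠ v k := fun h ↦ hkl (congrArg p (hv h)).symm
  have hnot : ¬H.Reachable (v k) (v i) ↔ H.Reachable (v l) (v i) := by
    rw [hH.not_reachable_iff (mem_insert_self ..)]
    simp [hvkl]
  simp only [mem_insert, mem_singleton, forall_eq_or_imp, forall_eq, ← hnot]
  have hor := hpkl i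
  have hnot_both : p i = p k → p i ≠ p l := fun h ↦ h ▸ hkl
  tauto

end ForestPoly

section FourMarkedVertices

variable {V : Type*} [Fintype V] [DecidableEq V] {R : Type*} [CommRing R] {G : SimpleGraph V}
  [DecidableRel G.Adj] {x : Sym2 V → R} {v : Fin 4 → V}

theorem forestPoly_bipartition (hv : Function.Injective v) {k l : ℕ} (hk : k = 1 ∨ k = 2)
    (hl : l = 1 ∨ l = 2) :
    forestPoly G x v ![some 1, some k, some l, some 2] = spanningSum G x fun H ↦
      (IsRootedForest H {v 0, v 3} ∧ (H.Reachable (v 0) (v 1) ↔ k = 1)) ∧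
        (H.Reachable (v 0) (v 2) ↔ l = 1) := by
  rw [forestPoly_of_two_parts hv (k := 0) (l := 3) (by simp [Fin.forall_fin_succ]) (by simp)
    (by simpa [Fin.forall_fin_succ] using ⟨hk, hl⟩)]
  refine spanningSum_congr fun H ↦ ?_
  rw [and_assoc]
  refine and_congr_right fun hH ↦ ?_
  have h03 : ¬H.Reachable (v 0) (v 3) :=
    (hH.not_reachable_iff (by simp)).2 ⟨v 3, by simp [hv.eq_iff], .rfl⟩
  simp [Fin.forall_fin_succ, h03]

theorem spanningSum_pair_not_reachable_one (hv : Function.Injective v) :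
    spanningSum G x (fun H ↦ IsRootedForest H {v 0, v 3} ∧ ¬H.Reachable (v 0) (v 1)) =
      forestPoly G x v ![some 1, some 2, some 1, some 2] +
        forestPoly G x v ![some 1, some 2, some 2, some 2] := by
  simp [forestPoly_bipartition hv, spanningSum_and_add_and_not]

theorem spanningSum_pair_reachable_one (hv : Function.Injective v) :
    spanningSum G x (fun H ↦ IsRootedForest H {v 0, v 3} ∧ H.Reachable (v 0) (v 1)) =
      forestPoly G x v ![some 1, some 1, some 1, some 2] +
        forestPoly G x v ![some 1, some 1, some 2, some 2] := by
  simp [forestPoly_bipartition hv, spanningSum_and_add_and_not]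

theorem spanningSum_pair_not_reachable_two (hv : Function.Injective v) :
    spanningSum G x (fun H ↦ IsRootedForest H {v 0, v 3} ∧ ¬H.Reachable (v 0) (v 2)) =
      forestPoly G x v ![some 1, some 1, some 2, some 2] +
        forestPoly G x v ![some 1, some 2, some 2, some 2] := by
  rw [← spanningSum_and_add_and_not _ fun H ↦ H.Reachable (v 0) (v 1),
    spanningSum_congr fun H ↦ and_right_comm (c := H.Reachable (v 0) (v 1)),
    spanningSum_congr fun H ↦ and_right_comm (c := ¬H.Reachable (v 0) (v 1))]
  simp [forestPoly_bipartition hv]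

theorem spanningSum_pair_not_reachable_three (hv : Function.Injective v) :
    spanningSum G x (fun H ↦ IsRootedForest H {v 0, v 3} ∧ ¬H.Reachable (v 0) (v 3)) =
      forestPoly G x v ![some 1, some 1, some 1, some 2] +
          forestPoly G x v ![some 1, some 1, some 2, some 2] +
        (forestPoly G x v ![some 1, some 2, some 1, some 2] +
          forestPoly G x v ![some 1, some 2, some 2, some 2]) := by
  rw [spanningSum_not_reachable_of_mem x (by simp) (by simp) (hv.ne (by decide)),
    ← spanningSum_and_add_and_not _ fun H ↦ H.Reachable (v 0) (v 1),
    spanningSum_pair_reachable_one hv, spanningSum_pair_not_reachable_one hv]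

end FourMarkedVertices

end SpanningForest

open SpanningForest

/-- **The identity `𝓛_{4,4}(1)`** for `m = 4` marked vertices on any graph:
`Φ_{(1,1,1,1)} Φ_{(1,2,3,4)} = A₄(B₁+B₄+B₅+B₆) + A₁(B₄+B₆) + A₂(B₄+B₅)` with
`A₁ = Φ_{(1,1,2,3)}`, `A₂ = Φ_{(1,2,1,3)}`, `A₄ = Φ_{(1,2,3,1)}`,
`B₁ = Φ_{(1,1,1,2)}`, `B₄ = Φ_{(1,2,2,2)}`, `B₅ = Φ_{(1,1,2,2)}`, `B₆ = Φ_{(1,2,1,2)}`. -/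
theorem L44_1_identity {V : Type*} [Fintype V] [DecidableEq V] {R : Type*}
    [CommRing R] (G : SimpleGraph V) [DecidableRel G.Adj] (x : Sym2 V → R)
    (v : Fin 4 → V) (hv : Function.Injective v) :
    let Φ : (Fin 4 → Option ℕ) → R := fun p => forestPoly G x v p
    let A1 := Φ ![some 1, some 1, some 2, some 3]
    let A2 := Φ ![some 1, some 2, some 1, some 3]
    let A4 := Φ ![some 1, some 2, some 3, some 1]
    let B1 := Φ ![some 1, some 1, some 1, some 2]
    let B4 := Φ ![some 1, some 2, some 2, some 2]
    let B5 := Φ ![some 1, some 1, some 2, some 2]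
    let B6 := Φ ![some 1, some 2, some 1, some 2]
    Φ ![some 1, some 1, some 1, some 1] * Φ ![some 1, some 2, some 3, some 4] =
      A4 * (B1 + B4 + B5 + B6) + A1 * (B4 + B6) + A2 * (B4 + B5) := by
  intro Φ A1 A2 A4 B1 B4 B5 B6
  have hT : Φ ![some 1, some 1, some 1, some 1] = _ :=
    forestPoly_of_const hv (k := 0) (by decide) (by decide)
  have hD : Φ ![some 1, some 2, some 3, some 4] = _ :=
    forestPoly_of_injective hv (by decide) (by decide)
  have hA1 : A1 = _ :=
    forestPoly_of_merge hv (k := 0) (j := 1) (by decide) (by decide) rfl (by decide)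
  have hA2 : A2 = _ :=
    forestPoly_of_merge hv (k := 0) (j := 2) (by decide) (by decide) rfl (by decide)
  have hA4 : A4 = _ :=
    forestPoly_of_merge hv (k := 0) (j := 3) (by decide) (by decide) rfl (by decide)
  have herase : univ.erase (0 : Fin 4) = {1, 2, 3} := by decide
  have h03 : v 0 ≠ v 3 := hv.ne (by decide)
  rw [hT, hD, spanningSum_singleton_mul x (by simp) (by simp) h03, ← image_erase hv,
    sum_image hv.injOn, herase, sum_insert (by decide), sum_pair (by decide), ← hA1, ← hA2, ← hA4,
    spanningSum_pair_not_reachable_one hv, spanningSum_pair_not_reachable_two hv,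
    spanningSum_pair_not_reachable_three hv]
  ring
end
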